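/- Let C ⊆ 𝔽_q^N be a code with at least two codewords. If C is MDS with respect to the (P,w,π)-metric (i.e., max_{J ∈ 𝓘^r} Σ_{i∈J} k_i = N − ⌈log_q |C|⌉ where r = ⌊(d_{(P,w,π)}(C)−1)/M_w⌋), then C is MDS with respect to the (P,π)-metric (i.e., max_{J ∈ 𝓘^{d_{(P,π)}(C)−1}} Σ_{i∈J} k_i = N − ⌈log_q |C|⌉). -/

import Mathlib

open scoped Classical

noncomputable section

variable {F : Type*} [Field F] [Fintype F]
variable {ι : Type*} [Fintype ι] [PartialOrder ι]

/-- The block weight induced by `w`: the maximum of the weights of the coordinates. -/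
def blockWt (w : F → ℕ) {m : ℕ} (v : Fin m → F) : ℕ :=
  Finset.univ.sup fun t => w (v t)

/-- `M_w`, the maximum weight of an element of `F`. -/
def maxWt (w : F → ℕ) : ℕ := Finset.univ.sup w

/-- `D_r = {α ∈ F : w(α) = r}`. -/
def Dset (w : F → ℕ) (r : ℕ) : Finset F := Finset.univ.filter fun a => w a = r

/-- `D_r^k = {v ∈ F^k : w̃^k(v) = r}`. -/
def Dk (w : F → ℕ) (m r : ℕ) : Finset (Fin m → F) :=
  Finset.univ.filter fun v => blockWt w v = r

/-- The order ideal (down-set) of the poset generated by a finite set `A`. -/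
def genIdeal (A : Finset ι) : Finset ι := Finset.univ.filter fun i => ∃ j ∈ A, i ≤ j

/-- The set of maximal elements of a finite set `I`. -/
def maxElems (I : Finset ι) : Finset ι := I.filter fun i => ∀ j ∈ I, i ≤ j → j = i

/-- `I` is an order ideal (down-set) of the poset. -/
def IsIdeal (I : Finset ι) : Prop := ∀ a b : ι, a ≤ b → b ∈ I → a ∈ I

/-- The collection `𝓘_j^i` of ideals of cardinality `i` with exactly `j` maximal elements. -/
def idealsWithMax (ι : Type*) [Fintype ι] [PartialOrder ι] (j i : ℕ) : Finset (Finset ι) :=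
  Finset.univ.filter fun I => IsIdeal I ∧ I.card = i ∧ (maxElems I).card = j

/-- The π-support of a block vector. -/
def suppPi (k : ι → ℕ) (x : ∀ i, Fin (k i) → F) : Finset ι :=
  Finset.univ.filter fun i => x i ≠ 0

/-- The `(P,w,π)`-weight. -/
def wtP (w : F → ℕ) (k : ι → ℕ) (x : ∀ i, Fin (k i) → F) : ℕ :=
  ∑ i ∈ maxElems (genIdeal (suppPi k x)), blockWt w (x i)
    + maxWt w * ((genIdeal (suppPi k x)) \ maxElems (genIdeal (suppPi k x))).card

/-- The `(P,w,π)`-distance. -/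
def dP (w : F → ℕ) (k : ι → ℕ) (x y : ∀ i, Fin (k i) → F) : ℕ := wtP w k (x - y)

/-- The `(P,π)`-weight: the cardinality of the ideal generated by the π-support. -/
def wtPpi (k : ι → ℕ) (x : ∀ i, Fin (k i) → F) : ℕ := (genIdeal (suppPi k x)).card

/-- The collection `𝓘^r` of ideals of cardinality `r`. -/
def idealsCard (ι : Type*) [Fintype ι] [PartialOrder ι] (r : ℕ) : Finset (Finset ι) :=
  Finset.univ.filter fun I => IsIdeal I ∧ I.card = r

/-!
Write `d` and `d_w` for the `(P,π)`- and `(P,w,π)`-minimum distances. Each position of the ideal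
`I_x` contributes at most `M_w` to the `(P,w,π)`-weight of `x`; hence `d_w ≤ M_w * d`, so
`⌊(d_w - 1) / M_w⌋ ≤ d - 1`. Adding minimal elements of the complement enlarges an ideal one element
at a time, so `max_{J ∈ 𝓘^r} Σ_{i ∈ J} k_i` is monotone in `r ≤ n`. At `r = d - 1` it is at most
`N - ⌈log_q |C|⌉`: two codewords that agree outside an ideal `J` with `d - 1` elements differ by a
vector of `(P,π)`-weight less than `d`, so they are equal. Hence if this bound is attained at
`⌊(d_w - 1) / M_w⌋`, it is also attained at `d - 1`.
-/

namespace IsIdeal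

theorem genIdeal_subset {A J : Finset ι} (hJ : IsIdeal J) (hA : A ⊆ J) : genIdeal A ⊆ J := by
  intro i hi
  obtain ⟨j, hj, hij⟩ := (Finset.mem_filter.1 hi).2
  exact hJ i j hij (hA hj)

theorem insert_of_minimal_notMem {α : Type*} [PartialOrder α] {J : Finset α} {m : α}
    (hJ : IsIdeal J) (hm : Minimal (· ∉ J) m) : IsIdeal (insert m J) := by
  intro a b hab hb
  rcases Finset.mem_insert.1 hb with rfl | hbJ
  · by_cases ha : a ∈ J
    · exact Finset.mem_insert_of_mem ha
    · exact Finset.mem_insert.2 (.inl (hm.eq_of_le ha hab))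
  · exact Finset.mem_insert_of_mem (hJ a b hab hbJ)

theorem exists_superset_card_eq {J : Finset ι} {n : ℕ} (hJ : IsIdeal J) (hJn : J.card ≤ n)
    (hn : n ≤ Fintype.card ι) : ∃ K : Finset ι, IsIdeal K ∧ J ⊆ K ∧ K.card = n := by
  induction n, hJn using Nat.le_induction with
  | base => exact ⟨J, hJ, subset_rfl, rfl⟩
  | succ n _ ih =>
    obtain ⟨K, hK, hJK, hKn⟩ := ih (by omega)
    obtain ⟨i, -, hi⟩ : ∃ i ∈ Finset.univ, i ∉ K :=
      Finset.exists_mem_notMem_of_card_lt_card (by rw [Finset.card_univ]; omega)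
    obtain ⟨m, hm⟩ := exists_minimal_of_wellFoundedLT (· ∉ K) ⟨i, hi⟩
    exact ⟨insert m K, hK.insert_of_minimal_notMem hm, hJK.trans (Finset.subset_insert m K),
      by rw [Finset.card_insert_of_notMem hm.prop, hKn]⟩

end IsIdeal

theorem subset_genIdeal (A : Finset ι) : A ⊆ genIdeal A :=
  fun i hi => Finset.mem_filter.2 ⟨Finset.mem_univ i, i, hi, le_rfl⟩

theorem mem_idealsCard {J : Finset ι} {r : ℕ} : J ∈ idealsCard ι r ↔ IsIdeal J ∧ J.card = r := by
  simp only [idealsCard, Finset.mem_filter, Finset.mem_univ, true_and]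

/-- The left-hand side `max_{J ∈ 𝓘^r} Σ_{i ∈ J} k_i` of the Singleton bound. It is `0` when there is
no ideal of cardinality `r`, that is, when `r` exceeds the size of the poset. -/
def maxIdealDim (k : ι → ℕ) (r : ℕ) : ℕ :=
  (idealsCard ι r).sup fun J => ∑ i ∈ J, k i

theorem maxIdealDim_mono (k : ι → ℕ) {r s : ℕ} (hrs : r ≤ s) (hs : s ≤ Fintype.card ι) :
    maxIdealDim k r ≤ maxIdealDim k s := by
  refine Finset.sup_le fun J hJr => ?_
  obtain ⟨hJ, rfl⟩ := mem_idealsCard.1 hJr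
  obtain ⟨K, hK, hJK, hKs⟩ := hJ.exists_superset_card_eq hrs hs
  calc ∑ i ∈ J, k i ≤ ∑ i ∈ K, k i := Finset.sum_le_sum_of_subset hJK
    _ ≤ maxIdealDim k s :=
      Finset.le_sup (f := fun J => ∑ i ∈ J, k i) (mem_idealsCard.2 ⟨hK, hKs⟩)

section MinDist

variable {G : Type*}

/-- The minimum distance of the code `C` for the distance `wt (x - y)` induced by the weight `wt`.
It is `0` when `C` has fewer than two codewords. -/
def minDist [Sub G] (wt : G → ℕ) (C : Finset G) : ℕ :=
  sInf {s : ℕ | ∃ c₁ ∈ C, ∃ c₂ ∈ C, c₁ ≠ c₂ ∧ wt (c₁ - c₂) = s}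

theorem minDist_le [Sub G] (wt : G → ℕ) {C : Finset G} {c₁ c₂ : G} (h₁ : c₁ ∈ C) (h₂ : c₂ ∈ C)
    (hne : c₁ ≠ c₂) : minDist wt C ≤ wt (c₁ - c₂) :=
  Nat.sInf_le ⟨c₁, h₁, c₂, h₂, hne, rfl⟩

theorem exists_minDist_eq [Sub G] (wt : G → ℕ) {C : Finset G} (hC : C.Nontrivial) :
    ∃ c₁ ∈ C, ∃ c₂ ∈ C, c₁ ≠ c₂ ∧ wt (c₁ - c₂) = minDist wt C := by
  obtain ⟨c₁, h₁, c₂, h₂, hne⟩ := hC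
  have hdist : {s : ℕ | ∃ c₁ ∈ C, ∃ c₂ ∈ C, c₁ ≠ c₂ ∧ wt (c₁ - c₂) = s}.Nonempty :=
    ⟨wt (c₁ - c₂), c₁, h₁, c₂, h₂, hne, rfl⟩
  exact Nat.sInf_mem hdist

theorem minDist_le_mul_minDist [Sub G] {wt wt' : G → ℕ} {M : ℕ} (h : ∀ x, wt x ≤ M * wt' x)
    {C : Finset G} (hC : C.Nontrivial) : minDist wt C ≤ M * minDist wt' C := by
  obtain ⟨c₁, h₁, c₂, h₂, hne, hd⟩ := exists_minDist_eq wt' hC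
  exact hd ▸ (minDist_le wt h₁ h₂ hne).trans (h (c₁ - c₂))

theorem minDist_pos [AddGroup G] {wt : G → ℕ} (h : ∀ x, x ≠ 0 → 0 < wt x) {C : Finset G}
    (hC : C.Nontrivial) : 0 < minDist wt C := by
  obtain ⟨c₁, -, c₂, -, hne, hd⟩ := exists_minDist_eq wt hC
  exact hd ▸ h _ (sub_ne_zero.2 hne)

end MinDist

section PosetWeight

variable {K : Type*} [Field K] {k : ι → ℕ}

theorem mem_suppPi {κ : Type*} [Fintype κ] {k : κ → ℕ} {x : ∀ i, Fin (k i) → K} {i : κ} :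
    i ∈ suppPi k x ↔ x i ≠ 0 := by
  simp only [suppPi, Finset.mem_filter, Finset.mem_univ, true_and]

theorem wtPpi_pos {x : ∀ i, Fin (k i) → K} (hx : x ≠ 0) : 0 < wtPpi k x := by
  obtain ⟨i, hi⟩ := Function.ne_iff.1 hx
  exact Finset.card_pos.2 ⟨i, subset_genIdeal _ (mem_suppPi.2 hi)⟩

theorem wtPpi_le_card {x : ∀ i, Fin (k i) → K} {J : Finset ι} (hJ : IsIdeal J)
    (hx : suppPi k x ⊆ J) : wtPpi k x ≤ J.card :=
  Finset.card_le_card (hJ.genIdeal_subset hx)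

theorem minDist_wtPpi_le_card {C : Finset (∀ i, Fin (k i) → K)} (hC : C.Nontrivial) :
    minDist (wtPpi k) C ≤ Fintype.card ι := by
  obtain ⟨c₁, -, c₂, -, -, hd⟩ := exists_minDist_eq (wtPpi k) hC
  exact hd ▸ Finset.card_le_univ _

theorem IsIdeal.injOn_restrict_compl {C : Finset (∀ i, Fin (k i) → K)} {J : Finset ι}
    (hJ : IsIdeal J) (hJd : J.card < minDist (wtPpi k) C) :
    Set.InjOn (Jᶜ).restrict (C : Set (∀ i, Fin (k i) → K)) := by
  intro c₁ h₁ c₂ h₂ heq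
  by_contra hne
  have hsupp : suppPi k (c₁ - c₂) ⊆ J := by
    intro i hi
    by_contra hiJ
    have hi_eq : c₁ i = c₂ i := congrFun heq ⟨i, Finset.mem_compl.2 hiJ⟩
    exact mem_suppPi.1 hi (sub_eq_zero.2 hi_eq)
  exact hJd.not_ge ((minDist_le (wtPpi k) h₁ h₂ hne).trans (wtPpi_le_card hJ hsupp))

end PosetWeight

theorem maxWt_pos {A : Type*} [Fintype A] {w : A → ℕ} (hw : w ≠ 0) : 0 < maxWt w := by
  obtain ⟨a, ha⟩ := Function.ne_iff.1 hw
  exact (Nat.pos_of_ne_zero ha).trans_le (Finset.le_sup (Finset.mem_univ a))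

theorem blockWt_le_maxWt {A : Type*} [Fintype A] (w : A → ℕ) {m : ℕ} (v : Fin m → A) :
    blockWt w v ≤ maxWt w :=
  Finset.sup_le fun t _ => Finset.le_sup (Finset.mem_univ (v t))

theorem maxElems_subset (I : Finset ι) : maxElems I ⊆ I :=
  Finset.filter_subset _ I

theorem wtP_le_maxWt_mul_wtPpi (w : F → ℕ) (k : ι → ℕ) (x : ∀ i, Fin (k i) → F) :
    wtP w k x ≤ maxWt w * wtPpi k x := by
  set I := genIdeal (suppPi k x)
  calc wtP w k x
      ≤ (maxElems I).card * maxWt w + maxWt w * (I \ maxElems I).card :=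
        Nat.add_le_add_right
          (Finset.sum_le_card_nsmul _ _ _ fun i _ => blockWt_le_maxWt w (x i)) _
    _ = maxWt w * ((I \ maxElems I).card + (maxElems I).card) := by ring
    _ = maxWt w * I.card := by
        rw [Finset.card_sdiff_add_card_eq_card (maxElems_subset I)]

theorem card_le_prod_of_injOn_restrict {κ : Type*} {α : κ → Type*} [∀ i, Fintype (α i)]
    {C : Finset (∀ i, α i)} {T : Finset κ} (h : Set.InjOn T.restrict (C : Set (∀ i, α i))) :
    C.card ≤ ∏ i ∈ T, Fintype.card (α i) :=
  calc C.card ≤ Fintype.card (∀ i : T, α i) :=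
        Finset.card_le_card_of_injOn T.restrict (fun _ _ => Finset.mem_univ _) h
    _ = ∏ i ∈ T, Fintype.card (α i) := by
        rw [Fintype.card_pi, Finset.prod_coe_sort T fun i => Fintype.card (α i)]

theorem maxIdealDim_le_of_lt_minDist {k : ι → ℕ} {C : Finset (∀ i, Fin (k i) → F)} {r : ℕ}
    (hr : r < minDist (wtPpi k) C) :
    maxIdealDim k r ≤ (∑ i, k i) - Nat.clog (Fintype.card F) C.card := by
  refine Finset.sup_le fun J hJr => ?_
  obtain ⟨hJ, rfl⟩ := mem_idealsCard.1 hJr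
  have hcard : C.card ≤ Fintype.card F ^ ∑ i ∈ Jᶜ, k i :=
    calc C.card ≤ ∏ i ∈ Jᶜ, Fintype.card (Fin (k i) → F) :=
          card_le_prod_of_injOn_restrict (hJ.injOn_restrict_compl hr)
      _ = Fintype.card F ^ ∑ i ∈ Jᶜ, k i := by
          simp only [Fintype.card_fun, Fintype.card_fin, Finset.prod_pow_eq_pow_sum]
  have hclog : Nat.clog (Fintype.card F) C.card ≤ ∑ i ∈ Jᶜ, k i := Nat.clog_le_of_le_pow hcard
  have hsum : ∑ i ∈ J, k i + ∑ i ∈ Jᶜ, k i = ∑ i, k i := Finset.sum_add_sum_compl J k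
  omega

theorem minDist_wtP_sub_one_div_le {w : F → ℕ} (hw : w ≠ 0) (k : ι → ℕ)
    {C : Finset (∀ i, Fin (k i) → F)} (hC : C.Nontrivial) :
    (minDist (wtP w k) C - 1) / maxWt w ≤ minDist (wtPpi k) C - 1 := by
  have hM : 0 < maxWt w := maxWt_pos hw
  have hd : 0 < minDist (wtPpi k) C := minDist_pos (fun _ => wtPpi_pos) hC
  have hle : minDist (wtP w k) C ≤ maxWt w * minDist (wtPpi k) C :=
    minDist_le_mul_minDist (wtP_le_maxWt_mul_wtPpi w k) hC
  have hMd : 0 < maxWt w * minDist (wtPpi k) C := Nat.mul_pos hM hd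
  exact Nat.le_sub_one_of_lt (Nat.div_lt_of_lt_mul (by omega))

theorem stmt17_general {w : F → ℕ} (hw : w ≠ 0) (k : ι → ℕ) {C : Finset (∀ i, Fin (k i) → F)}
    (hC : C.Nontrivial)
    (hMDS : maxIdealDim k ((minDist (wtP w k) C - 1) / maxWt w) =
      (∑ i, k i) - Nat.clog (Fintype.card F) C.card) :
    maxIdealDim k (minDist (wtPpi k) C - 1) =
      (∑ i, k i) - Nat.clog (Fintype.card F) C.card := by
  have hd : 0 < minDist (wtPpi k) C := minDist_pos (fun _ => wtPpi_pos) hC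
  have hdn : minDist (wtPpi k) C ≤ Fintype.card ι := minDist_wtPpi_le_card hC
  refine le_antisymm (maxIdealDim_le_of_lt_minDist (Nat.sub_one_lt_of_lt hd)) ?_
  exact hMDS ▸ maxIdealDim_mono k (minDist_wtP_sub_one_div_le hw k hC) ((Nat.sub_le _ 1).trans hdn)

/-- a code that is MDS with respect to the `(P,w,π)`-metric is also MDS with
respect to the `(P,π)`-metric. -/
theorem stmt17 (w : F → ℕ) (hw0 : ∀ a : F, w a = 0 ↔ a = 0)
    (hwneg : ∀ a : F, w (-a) = w a) (hwadd : ∀ a b : F, w (a + b) ≤ w a + w b)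
    (k : ι → ℕ) (C : Finset (∀ i, Fin (k i) → F)) (hC : 2 ≤ C.card)
    (dw dpi : ℕ)
    (hdw : dw = sInf {s : ℕ | ∃ c₁ ∈ C, ∃ c₂ ∈ C, c₁ ≠ c₂ ∧ wtP w k (c₁ - c₂) = s})
    (hdpi : dpi = sInf {s : ℕ | ∃ c₁ ∈ C, ∃ c₂ ∈ C, c₁ ≠ c₂ ∧ wtPpi k (c₁ - c₂) = s})
    (hMDS : (idealsCard ι ((dw - 1) / maxWt w)).sup (fun J => ∑ i ∈ J, k i) =
      (∑ i : ι, k i) - Nat.clog (Fintype.card F) C.card) :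
    (idealsCard ι (dpi - 1)).sup (fun J => ∑ i ∈ J, k i) =
      (∑ i : ι, k i) - Nat.clog (Fintype.card F) C.card := by
  subst hdw hdpi
  have hw : w ≠ 0 := fun h => one_ne_zero ((hw0 1).1 (congrFun h 1))
  exact stmt17_general hw k (Finset.one_lt_card_iff_nontrivial.1 hC) hMDS
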